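/- arXiv:2408.10265 — 2 statements merged into one kernel-verified Lean document; each statement's English description precedes it below -/
import Mathlib

section
/- Let N, D ∈ ℕ with D ≥ 1, let σ > 0, and let w₁,…,w_D be independent random vectors in ℝ^N, each having independent components distributed as real Gaussians with mean 0 and variance σ⁻². For x ∈ ℝ^N define the random feature vector φ(x) ∈ ℝ^{2D} whose entries are φ(x)_{2j−1} = (1/√D)·cos(⟨w_j, x⟩) and φ(x)_{2j} = (1/√D)·sin(⟨w_j, x⟩) for j = 1,…,D. Then for all x, y ∈ ℝ^N, the expected Euclidean inner product satisfies E[⟨φ(x), φ(y)⟩] = exp(−‖x−y‖²/(2σ²)), i.e. the quantum feature map built from these random Fourier features is an unbiased estimator of the RBF (Gaussian) kernel K_RBF(x,y) = exp(−‖x−y‖²/(2σ²)). -/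
/-!
Since `cos a cos b + sin a sin b = cos (a - b)`, the inner product `⟨φ(x), φ(y)⟩` is the average
over `j` of `cos ⟨w_j, x - y⟩`. The `w_j` share one law `μ`, so the expectation is
`∫ cos ⟨u, x - y⟩ ∂μ(u)`, the real part of the characteristic function of `μ` at `x - y`. For a
product of Gaussians this characteristic function factors into one-dimensional ones.
-/

open MeasureTheory ProbabilityTheory

/-- The random Fourier feature vector `φ(x) ∈ ℝ^{2D}` built from frequencies
`w = (w₁,…,w_D)`: indexing the `2D` coordinates by pairs `(j, 0)` and `(j, 1)`,
the entries are `(1/√D)·cos(⟨w_j, x⟩)` and `(1/√D)·sin(⟨w_j, x⟩)`. -/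
noncomputable def rbfFeature (N D : ℕ) (w : Fin D → Fin N → ℝ) (x : Fin N → ℝ) :
    Fin D × Fin 2 → ℝ := fun p =>
  if p.2 = 0 then (1 / Real.sqrt D) * Real.cos (∑ k, w p.1 k * x k)
  else (1 / Real.sqrt D) * Real.sin (∑ k, w p.1 k * x k)

open scoped NNReal RealInnerProductSpace

lemma re_charFun_eq_integral_cos {E : Type*} [NormedAddCommGroup E] [InnerProductSpace ℝ E]
    [MeasurableSpace E] [OpensMeasurableSpace E] (μ : Measure E) [IsFiniteMeasure μ] (t : E) :
    (charFun μ t).re = ∫ x, Real.cos ⟪x, t⟫ ∂μ := by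
  have h_integrable : Integrable (fun x ↦ Complex.exp (⟪x, t⟫ * Complex.I)) μ := by
    refine .of_bound (C := 1) (Continuous.aestronglyMeasurable (by fun_prop))
      (.of_forall fun x ↦ ?_)
    exact (Complex.norm_exp_ofReal_mul_I _).le
  simpa [charFun_apply] using (integral_re h_integrable).symm

section Pi

variable {ι : Type*} [Fintype ι]

lemma integral_cos_sum_pi_eq_re_prod_charFun (μ : ι → Measure ℝ) [∀ i, IsFiniteMeasure (μ i)]
    (t : ι → ℝ) :
    ∫ w, Real.cos (∑ i, w i * t i) ∂Measure.pi μ = (∏ i, charFun (μ i) (t i)).re := by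
  have h_inner (w : ι → ℝ) : ⟪WithLp.toLp 2 w, WithLp.toLp 2 t⟫ = ∑ i, w i * t i := by
    simp [PiLp.inner_apply, mul_comm]
  rw [← charFun_pi (WithLp.toLp 2 t), re_charFun_eq_integral_cos,
    integral_map (by fun_prop) (Continuous.aestronglyMeasurable (by fun_prop))]
  simp_rw [h_inner]

lemma integral_cos_sum_pi_gaussianReal (m : ι → ℝ) (v : ι → ℝ≥0) (t : ι → ℝ) :
    ∫ w, Real.cos (∑ i, w i * t i) ∂Measure.pi (fun i ↦ gaussianReal (m i) (v i)) =
      Real.exp (-(∑ i, v i * t i ^ 2) / 2) * Real.cos (∑ i, m i * t i) := by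
  have h_exponent : ∑ i, ((t i : ℂ) * m i * Complex.I - v i * (t i : ℂ) ^ 2 / 2) =
      (-(∑ i, v i * t i ^ 2) / 2 : ℝ) + (∑ i, m i * t i : ℝ) * Complex.I := by
    push_cast
    rw [Finset.sum_sub_distrib, ← Finset.sum_mul, ← Finset.sum_div]
    simp_rw [mul_comm (m _ : ℂ)]
    ring
  simp_rw [integral_cos_sum_pi_eq_re_prod_charFun, charFun_gaussianReal]
  rw [← Complex.exp_sum, h_exponent, Complex.exp_add, ← Complex.ofReal_exp,
    Complex.re_ofReal_mul, Complex.exp_ofReal_mul_I_re]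

lemma integral_average_comp_eval [Nonempty ι] {X E : Type*} [MeasurableSpace X]
    [NormedAddCommGroup E] [NormedSpace ℝ E] {μ : Measure X} [IsProbabilityMeasure μ] {f : X → E}
    (hf : Integrable f μ) :
    ∫ w : ι → X, (Fintype.card ι : ℝ)⁻¹ • ∑ i, f (w i) ∂Measure.pi (fun _ ↦ μ) =
      ∫ u, f u ∂μ := by
  rw [integral_smul, integral_finsetSum _ fun i _ ↦ integrable_comp_eval hf]
  simp_rw [integral_comp_eval (μ := fun _ : ι ↦ μ) hf.aestronglyMeasurable]
  simp [← Nat.cast_smul_eq_nsmul ℝ]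

end Pi

lemma sum_rbfFeature_mul_rbfFeature (N D : ℕ) (w : Fin D → Fin N → ℝ) (x y : Fin N → ℝ) :
    ∑ p, rbfFeature N D w x p * rbfFeature N D w y p =
      (D : ℝ)⁻¹ * ∑ j, Real.cos (∑ k, w j k * (x k - y k)) := by
  have h_scale : (Real.sqrt D)⁻¹ * (Real.sqrt D)⁻¹ = (D : ℝ)⁻¹ := by
    rw [← mul_inv, Real.mul_self_sqrt D.cast_nonneg]
  simp only [Fintype.sum_prod_type, Fin.sum_univ_two, rbfFeature, if_true, one_ne_zero, if_false,
    one_div, mul_sub, Finset.sum_sub_distrib, Real.cos_sub, ← h_scale, Finset.mul_sum]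
  exact Finset.sum_congr rfl fun j _ ↦ by ring

lemma integral_sum_rbfFeature_mul_rbfFeature {N D : ℕ} [NeZero D] (μ : Measure (Fin N → ℝ))
    [IsProbabilityMeasure μ] (x y : Fin N → ℝ) :
    ∫ w, ∑ p, rbfFeature N D w x p * rbfFeature N D w y p ∂Measure.pi (fun _ ↦ μ) =
      ∫ u, Real.cos (∑ k, u k * (x k - y k)) ∂μ := by
  have h_integrable : Integrable (fun u : Fin N → ℝ ↦ Real.cos (∑ k, u k * (x k - y k))) μ :=
    .of_bound (C := 1) (Continuous.aestronglyMeasurable (by fun_prop))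
      (.of_forall fun u ↦ Real.abs_cos_le_one _)
  simpa [sum_rbfFeature_mul_rbfFeature] using
    integral_average_comp_eval (ι := Fin D) h_integrable

/-- Random Fourier features with independent Gaussian frequencies (each `w_j` having
independent `N(0, σ⁻²)` components, joint law the product measure) give an unbiased
estimator of the RBF kernel: for all `x, y ∈ ℝ^N`,
`E[⟨φ(x), φ(y)⟩] = exp(−‖x−y‖²/(2σ²))`. -/
theorem rbfFeature_expectation_inner (N D : ℕ) (hD : 1 ≤ D) (σ : ℝ) (hσ : 0 < σ)
    (x y : Fin N → ℝ) :
    ∫ w : Fin D → Fin N → ℝ,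
        (∑ p : Fin D × Fin 2, rbfFeature N D w x p * rbfFeature N D w y p)
        ∂(Measure.pi fun _ : Fin D =>
            Measure.pi fun _ : Fin N => gaussianReal 0 ((σ ^ 2).toNNReal)⁻¹)
      = Real.exp (-(∑ k, (x k - y k) ^ 2) / (2 * σ ^ 2)) := by
  have : NeZero D := ⟨by omega⟩
  have h_exponent : -(∑ k, (((σ ^ 2).toNNReal)⁻¹ : ℝ≥0) * (x k - y k) ^ 2) / 2 =
      -(∑ k, (x k - y k) ^ 2) / (2 * σ ^ 2) := by
    rw [← Finset.mul_sum, NNReal.coe_inv, Real.coe_toNNReal _ (sq_nonneg σ)]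
    field_simp
  rw [integral_sum_rbfFeature_mul_rbfFeature, integral_cos_sum_pi_gaussianReal, h_exponent]
  simp
end

section
/- Let N ∈ ℕ, let γ > 0, and let w = (w₁,…,w_N) be a random vector in ℝ^N whose components are independent, each distributed according to the centered Cauchy distribution with scale γ. Then for any fixed v ∈ ℝ^N with v ≠ 0, the real random variable ⟨w, v⟩ = Σ_{k=1}^N w_k v_k is distributed according to the centered Cauchy distribution with scale γ·‖v‖₁, where ‖v‖₁ = Σ_{k=1}^N |v_k|; i.e., the pushforward of the joint law of w under w ↦ ⟨w, v⟩ has density s ↦ (γ‖v‖₁)/(π(s² + γ²‖v‖₁²)) with respect to Lebesgue measure. -/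
open MeasureTheory

/-- The centered Cauchy distribution with scale parameter `γ`: the measure on `ℝ`
with density `s ↦ γ/(π(s² + γ²))` with respect to Lebesgue measure. -/
noncomputable def cauchyMeasure (γ : ℝ) : Measure ℝ :=
  volume.withDensity fun s => ENNReal.ofReal (γ / (Real.pi * (s ^ 2 + γ ^ 2)))

/-!
By Fourier inversion, the characteristic function of the Cauchy distribution with location `x₀` and
scale `γ` is `t ↦ exp (i x₀ t - γ |t|)`, because the Cauchy density is the Fourier transform of a
two-sided exponential. The exponent is additive in `(x₀, γ)`, and replacing `t` by `c t` turns
`(x₀, γ)` into `(x₀ c, γ |c|)`; so a linear combination of independent Cauchy variables has the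
characteristic function of a Cauchy variable.
-/

open Complex Set
open ProbabilityTheory hiding cauchyMeasure
open scoped FourierTransform NNReal Real

section TwoSidedExponential

lemma eqOn_Iic_cexp_mul_sub_mul_abs (w z : ℂ) :
    EqOn (fun x : ℝ => cexp (z * x - w * |x|)) (fun x : ℝ => cexp ((z + w) * x)) (Iic 0) := by
  intro x hx
  simp only [abs_of_nonpos (mem_Iic.mp hx), ofReal_neg]
  ring_nf

lemma eqOn_Ioi_cexp_mul_sub_mul_abs (w z : ℂ) :
    EqOn (fun x : ℝ => cexp (z * x - w * |x|)) (fun x : ℝ => cexp ((z - w) * x)) (Ioi 0) := by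
  intro x hx
  simp only [abs_of_pos (mem_Ioi.mp hx)]
  ring_nf

variable {w z : ℂ}

lemma integrableOn_Iic_cexp_mul_sub_mul_abs (h : 0 < (z + w).re) :
    IntegrableOn (fun x : ℝ => cexp (z * x - w * |x|)) (Iic 0) :=
  (integrableOn_exp_mul_complex_Iic h 0).congr_fun
    (eqOn_Iic_cexp_mul_sub_mul_abs w z).symm measurableSet_Iic

lemma integrableOn_Ioi_cexp_mul_sub_mul_abs (h : (z - w).re < 0) :
    IntegrableOn (fun x : ℝ => cexp (z * x - w * |x|)) (Ioi 0) :=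
  (integrableOn_exp_mul_complex_Ioi h 0).congr_fun
    (eqOn_Ioi_cexp_mul_sub_mul_abs w z).symm measurableSet_Ioi

lemma re_add_pos_and_re_sub_neg (h : |z.re| < w.re) : 0 < (z + w).re ∧ (z - w).re < 0 := by
  rw [add_re, sub_re]
  constructor <;> linarith [abs_lt.mp h]

lemma integrable_cexp_mul_sub_mul_abs (h : |z.re| < w.re) :
    Integrable fun x : ℝ => cexp (z * x - w * |x|) := by
  obtain ⟨hadd, hsub⟩ := re_add_pos_and_re_sub_neg h
  rw [← integrableOn_univ, ← Iic_union_Ioi (a := (0 : ℝ))]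
  exact (integrableOn_Iic_cexp_mul_sub_mul_abs hadd).union
    (integrableOn_Ioi_cexp_mul_sub_mul_abs hsub)

lemma integral_cexp_mul_sub_mul_abs (h : |z.re| < w.re) :
    ∫ x : ℝ, cexp (z * x - w * |x|) = 2 * w / (w ^ 2 - z ^ 2) := by
  obtain ⟨hadd, hsub⟩ := re_add_pos_and_re_sub_neg h
  have hadd_ne : z + w ≠ 0 := fun h0 => by simp [h0] at hadd
  have hsub_ne : z - w ≠ 0 := fun h0 => by simp [h0] at hsub
  have hsq : w ^ 2 - z ^ 2 = -((z + w) * (z - w)) := by ring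
  calc ∫ x : ℝ, cexp (z * x - w * |x|)
      = (∫ x in Iic (0 : ℝ), cexp (z * x - w * |x|))
          + ∫ x in Ioi (0 : ℝ), cexp (z * x - w * |x|) :=
        (intervalIntegral.integral_Iic_add_Ioi (integrableOn_Iic_cexp_mul_sub_mul_abs hadd)
          (integrableOn_Ioi_cexp_mul_sub_mul_abs hsub)).symm
    _ = (∫ x in Iic (0 : ℝ), cexp ((z + w) * x)) + ∫ x in Ioi (0 : ℝ), cexp ((z - w) * x) := by
        rw [setIntegral_congr_fun measurableSet_Iic (eqOn_Iic_cexp_mul_sub_mul_abs w z),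
          setIntegral_congr_fun measurableSet_Ioi (eqOn_Ioi_cexp_mul_sub_mul_abs w z)]
    _ = 1 / (z + w) - 1 / (z - w) := by
        rw [integral_exp_mul_complex_Iic hadd, integral_exp_mul_complex_Ioi hsub]
        simp only [ofReal_zero, mul_zero, Complex.exp_zero, neg_div, sub_eq_add_neg]
    _ = 2 * w / (w ^ 2 - z ^ 2) := by
        rw [hsq]
        field_simp
        ring

end TwoSidedExponential

lemma charFun_withDensity_ofReal {E : Type*} [NormedAddCommGroup E] [InnerProductSpace ℝ E]
    [FiniteDimensional ℝ E] [MeasurableSpace E] [BorelSpace E] {f : E → ℝ}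
    (hf : Measurable f) (hf_nonneg : 0 ≤ f) (t : E) :
    charFun (volume.withDensity fun x => ENNReal.ofReal (f x)) t
      = 𝓕⁻ (fun x => (f x : ℂ)) ((2 * π)⁻¹ • t) := by
  rw [charFun_apply, Real.fourierInv_eq',
    integral_withDensity_eq_integral_toReal_smul (by fun_prop) (by simp)]
  congr with x
  have hphase : 2 * π * inner ℝ x ((2 * π)⁻¹ • t) = inner ℝ x t := by
    rw [inner_smul_right, mul_inv_cancel_left₀ Real.two_pi_pos.ne']
  rw [hphase, ENNReal.toReal_ofReal (hf_nonneg x), real_smul, smul_eq_mul, mul_comm]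

lemma charFun_map_sum_smul_pi {ι E : Type*} [Fintype ι] [NormedAddCommGroup E]
    [InnerProductSpace ℝ E] [MeasurableSpace E] [BorelSpace E] [SecondCountableTopology E]
    (μ : ι → Measure E) [∀ i, IsProbabilityMeasure (μ i)] (c : ι → ℝ) (t : E) :
    charFun ((Measure.pi μ).map fun x => ∑ i, c i • x i) t = ∏ i, charFun (μ i) (c i • t) := by
  have hindep : iIndepFun (fun i (x : ι → E) => c i • x i) (Measure.pi μ) :=
    iIndepFun_pi (X := fun i x => c i • x) fun i => by fun_prop
  have heval (i : ι) : AEMeasurable (fun x : ι → E => x i) (Measure.pi μ) :=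
    (measurable_pi_apply i).aemeasurable
  have hsmul (i : ι) : AEMeasurable (fun x : ι → E => c i • x i) (Measure.pi μ) :=
    (heval i).const_smul (c i)
  rw [hindep.charFun_map_fun_sum_eq_prod hsmul, Finset.prod_apply]
  refine Finset.prod_congr rfl fun i _ => ?_
  rw [charFun_map_smul_comp (heval i), (measurePreserving_eval μ i).map_eq]

section Cauchy

variable {γ : ℝ≥0}

lemma fourier_cexp_mul_sub_mul_abs (x₀ : ℝ) (hγ : γ ≠ 0) :
    𝓕 (fun x : ℝ => cexp (2 * π * x₀ * I * x - 2 * π * γ * |x|))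
      = fun ξ => (cauchyPDFReal x₀ γ ξ : ℂ) := by
  ext ξ
  have hγ_pos : (0 : ℝ) < γ := by positivity
  calc 𝓕 (fun x : ℝ => cexp (2 * π * x₀ * I * x - 2 * π * γ * |x|)) ξ
      = ∫ x : ℝ, cexp (2 * π * (x₀ - ξ) * I * x - 2 * π * γ * |x|) := by
        rw [Real.fourier_real_eq_integral_exp_smul]
        congr with x
        rw [smul_eq_mul, ← Complex.exp_add]
        push_cast
        ring_nf
    _ = 2 * (2 * π * γ) / ((2 * π * γ) ^ 2 - (2 * π * (x₀ - ξ) * I) ^ 2) :=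
        integral_cexp_mul_sub_mul_abs (by simpa [Real.pi_pos] using hγ_pos)
    _ = ((2 * (2 * π * γ) / ((2 * π) ^ 2 * ((ξ - x₀) ^ 2 + γ ^ 2)) : ℝ) : ℂ) := by
        push_cast
        congr 1
        linear_combination -(2 * π * (x₀ - ξ)) ^ 2 * I_sq
    _ = (cauchyPDFReal x₀ γ ξ : ℂ) := by
        rw [cauchyPDFReal_def]
        congr 1
        field_simp

lemma fourierInv_cauchyPDFReal (x₀ : ℝ) (hγ : γ ≠ 0) :
    𝓕⁻ (fun ξ => (cauchyPDFReal x₀ γ ξ : ℂ))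
      = fun x : ℝ => cexp (2 * π * x₀ * I * x - 2 * π * γ * |x|) := by
  rw [← fourier_cexp_mul_sub_mul_abs x₀ hγ]
  refine Continuous.fourierInv_fourier_eq (by fun_prop)
    (integrable_cexp_mul_sub_mul_abs (by simpa [Real.pi_pos] using hγ.bot_lt)) ?_
  rw [fourier_cexp_mul_sub_mul_abs x₀ hγ]
  exact (integrable_cauchyPDFReal x₀).ofReal

lemma charFun_cauchyMeasure (x₀ : ℝ) (γ : ℝ≥0) (t : ℝ) :
    charFun (ProbabilityTheory.cauchyMeasure x₀ γ) t = cexp (x₀ * t * I - γ * |t|) := by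
  obtain rfl | hγ := eq_or_ne γ 0
  · simp [charFun_dirac, mul_comm]
  have hdensity_nonneg : 0 ≤ cauchyPDFReal x₀ γ := fun x => (cauchyPDF_pos x₀ hγ x).le
  rw [cauchyMeasure_of_scale_ne_zero x₀ hγ]
  unfold cauchyPDF
  rw [charFun_withDensity_ofReal (by fun_prop) hdensity_nonneg, fourierInv_cauchyPDFReal x₀ hγ]
  simp only [smul_eq_mul, abs_mul, abs_inv, abs_of_pos Real.two_pi_pos]
  push_cast
  congr 1
  field_simp

-- The conventions differ at scale zero: the zero measure here, a Dirac mass in Mathlib.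
lemma cauchyMeasure_coe_nnreal (hγ : γ ≠ 0) :
    cauchyMeasure γ = ProbabilityTheory.cauchyMeasure 0 γ := by
  rw [cauchyMeasure_of_scale_ne_zero 0 hγ, cauchyMeasure]
  congr with s
  rw [cauchyPDF_def, cauchyPDFReal_def, sub_zero]
  congr 1
  field_simp

end Cauchy

theorem map_pi_cauchy_inner_general {ι : Type*} [Fintype ι] (x₀ : ι → ℝ) (γ : ι → ℝ≥0)
    (v : ι → ℝ) :
    Measure.map (fun w : ι → ℝ => ∑ k, w k * v k)
        (Measure.pi fun k => ProbabilityTheory.cauchyMeasure (x₀ k) (γ k))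
      = ProbabilityTheory.cauchyMeasure (∑ k, x₀ k * v k) (∑ k, γ k * ‖v k‖₊) := by
  refine Measure.ext_of_charFun (funext fun t => ?_)
  have hcomm : (fun w : ι → ℝ => ∑ k, w k * v k) = fun w => ∑ k, v k • w k := by
    simp only [smul_eq_mul, mul_comm]
  have hterm (k : ι) : (x₀ k * (v k * t : ℝ) * I - γ k * |v k * t| : ℂ)
      = x₀ k * v k * (t * I) - γ k * |v k| * |t| := by
    rw [abs_mul]
    push_cast
    ring
  calc charFun (Measure.map (fun w : ι → ℝ => ∑ k, w k * v k) (Measure.pi fun k =>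
        ProbabilityTheory.cauchyMeasure (x₀ k) (γ k))) t
      = ∏ k, cexp (x₀ k * (v k * t : ℝ) * I - γ k * |v k * t|) := by
        rw [hcomm, charFun_map_sum_smul_pi]
        simp only [charFun_cauchyMeasure, smul_eq_mul]
    _ = cexp ((∑ k, x₀ k * v k : ℝ) * t * I - (∑ k, γ k * ‖v k‖₊ : ℝ≥0) * |t|) := by
        simp only [← Complex.exp_sum, hterm, Finset.sum_sub_distrib, ← Finset.sum_mul]
        push_cast
        simp only [Real.norm_eq_abs, mul_assoc]
    _ = charFun (ProbabilityTheory.cauchyMeasure (∑ k, x₀ k * v k) (∑ k, γ k * ‖v k‖₊)) t :=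
        (charFun_cauchyMeasure _ _ t).symm

/-- Closure of Cauchy distributions under linear transformations: if `w = (w₁,…,w_N)`
has independent components each distributed as the centered Cauchy distribution with
scale `γ > 0` (joint law the product measure), then for any fixed `v ≠ 0` the
pushforward of this joint law under `w ↦ ⟨w, v⟩ = ∑ k, w k * v k` is the centered
Cauchy distribution with scale `γ·‖v‖₁`. -/
theorem map_pi_cauchy_inner (N : ℕ) (γ : ℝ) (hγ : 0 < γ) (v : Fin N → ℝ) (hv : v ≠ 0) :
    Measure.map (fun w : Fin N → ℝ => ∑ k, w k * v k)
        (Measure.pi fun _ : Fin N => cauchyMeasure γ)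
      = cauchyMeasure (γ * ∑ k, |v k|) := by
  lift γ to ℝ≥0 using hγ.le
  have hγ_ne : γ ≠ 0 := (NNReal.coe_pos.mp hγ).ne'
  have hscale : γ * ∑ k, ‖v k‖₊ ≠ 0 := by
    simpa [Finset.sum_eq_zero_iff, funext_iff, hγ_ne] using hv
  have hnorm : (γ : ℝ) * ∑ k, |v k| = (γ * ∑ k, ‖v k‖₊ : ℝ≥0) := by simp
  rw [hnorm, cauchyMeasure_coe_nnreal hscale, cauchyMeasure_coe_nnreal hγ_ne,
    map_pi_cauchy_inner_general]
  simp [Finset.mul_sum]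
end
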